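/- arXiv:0904.1906 — 2 statements merged into one kernel-verified Lean document; each statement's English description precedes it below -/
import Mathlib

section
/- Let ξ, η ∈ ℤ² be integer vectors, let M = max of the absolute values of the two coordinates of ξ, and let D = |ξ₁η₂ − ξ₂η₁| be the absolute value of their determinant. Suppose M > 0 and 2·D ≥ M². Then every closed disc in ℝ² of radius 4·D/M contains at least one point of the lattice Λ = ℤξ + ℤη. -/
lemma exists_int_near (e t : ℝ) (he : e ≠ 0) : ∃ n : ℤ, (n * e + t) ^ 2 ≤ e ^ 2 / 4 := by
  refine ⟨round (-t / e), ?_⟩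
  have h := abs_sub_round (-t / e)
  set n : ℝ := ((round (-t / e) : ℤ) : ℝ)
  have h2 : n * e + t = -((-t / e - n) * e) := by field_simp; ring
  have h3 : (-t / e - n) ^ 2 ≤ (1 / 2) ^ 2 := by
    rw [← sq_abs]; gcongr
  rw [h2, neg_sq, mul_pow]
  nlinarith [sq_nonneg e]

/-- If ξ, η ∈ ℤ² with M = max{|ξ₁|,|ξ₂|} > 0 and D = |ξ₁η₂ − ξ₂η₁| satisfying 2D ≥ M²,
then every closed Euclidean disc of radius 4D/M in ℝ² contains a point of ℤξ + ℤη. -/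
theorem lattice_point_in_disc (ξ η : ℤ × ℤ) (M D : ℤ)
    (hMdef : M = max |ξ.1| |ξ.2|) (hDdef : D = |ξ.1 * η.2 - ξ.2 * η.1|)
    (hM : 0 < M) (hD : (M : ℝ) ^ 2 ≤ 2 * (D : ℝ)) :
    ∀ center : ℝ × ℝ, ∃ l μ : ℤ,
      Real.sqrt ((((l * ξ.1 + μ * η.1 : ℤ) : ℝ) - center.1) ^ 2 +
                 (((l * ξ.2 + μ * η.2 : ℤ) : ℝ) - center.2) ^ 2)
        ≤ 4 * (D : ℝ) / (M : ℝ) := by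
  rintro ⟨x, y⟩
  obtain ⟨a, b⟩ := ξ
  obtain ⟨p, q⟩ := η
  simp only at hMdef hDdef ⊢
  have hM' : (0 : ℝ) < M := by exact_mod_cast hM
  have hD' : (0 : ℝ) < D := by nlinarith [pow_pos hM' 2]
  have hd2 : ((a : ℝ) * q - b * p) ^ 2 = (D : ℝ) ^ 2 := by
    rw [hDdef]; push_cast; rw [sq_abs]
  have hd : ((a : ℝ) * q - b * p) ≠ 0 := by
    intro h; rw [h] at hd2; nlinarith
  have ha : (a : ℝ) ^ 2 ≤ (M : ℝ) ^ 2 := by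
    have : |a| ≤ M := hMdef ▸ le_max_left _ _
    rw [← sq_abs]; gcongr; exact_mod_cast this
  have hb : (b : ℝ) ^ 2 ≤ (M : ℝ) ^ 2 := by
    have : |b| ≤ M := hMdef ▸ le_max_right _ _
    rw [← sq_abs]; gcongr; exact_mod_cast this
  have hN1 : (M : ℝ) ^ 2 ≤ (a : ℝ) ^ 2 + (b : ℝ) ^ 2 := by
    rcases max_choice |a| |b| with h | h <;> rw [h] at hMdef <;> rw [hMdef] <;> push_cast <;>
      rw [sq_abs] <;> nlinarith [sq_nonneg (a : ℝ), sq_nonneg (b : ℝ)]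
  have hM2 := pow_pos hM' 2
  obtain ⟨m, hm⟩ := exists_int_near _ (-((a : ℝ) * y - b * x)) hd
  obtain ⟨l, hl⟩ := exists_int_near ((a : ℝ) ^ 2 + (b : ℝ) ^ 2)
    (a * (m * p - x) + b * (m * q - y)) (by linarith)
  refine ⟨l, m, ?_⟩
  apply Real.sqrt_le_iff.mpr
  refine ⟨by positivity, ?_⟩
  push_cast
  rw [hd2] at hm
  set V : ℝ := ((l : ℝ) * a + m * p - x) ^ 2 + ((l : ℝ) * b + m * q - y) ^ 2 with hV
  set N : ℝ := (a : ℝ) ^ 2 + (b : ℝ) ^ 2 with hN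
  have key : V * N ≤ N ^ 2 / 4 + (D : ℝ) ^ 2 / 4 := by
    have e : V * N = (l * N + (a * (m * p - x) + b * (m * q - y))) ^ 2
      + (m * ((a : ℝ) * q - b * p) + -((a : ℝ) * y - b * x)) ^ 2 := by
      rw [hV, hN]; ring
    rw [e]; linarith
  have hNpos : 0 < N := by linarith
  have hM4 : ((M : ℝ) ^ 2) ^ 2 ≤ (2 * (D : ℝ)) ^ 2 := by gcongr
  have hVM : V * (M : ℝ) ^ 2 ≤ 16 * (D : ℝ) ^ 2 := by
    have h1 : V * (M : ℝ) ^ 2 * N ≤ 16 * (D : ℝ) ^ 2 * N := by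
      have h2 : N * (M : ℝ) ^ 2 ≤ 2 * (2 * (D : ℝ)) ^ 2 := by nlinarith
      have h3 : V * N * (M : ℝ) ^ 2 ≤ (N ^ 2 / 4 + (D : ℝ) ^ 2 / 4) * (M : ℝ) ^ 2 := by gcongr
      have h4 : N * (N * (M : ℝ) ^ 2) ≤ N * (2 * (2 * (D : ℝ)) ^ 2) := by gcongr
      have h5 : (D : ℝ) ^ 2 * (M : ℝ) ^ 2 ≤ (D : ℝ) ^ 2 * N := by gcongr
      have h6 : 0 ≤ (D : ℝ) ^ 2 * N := by positivity
      nlinarith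
    exact le_of_mul_le_mul_right h1 hNpos
  rw [div_pow, le_div_iff₀ hM2]
  linarith
end

section
/- Let ξ, η ∈ ℤ² be integer vectors, let M = max of the absolute values of the two coordinates of ξ, and let D = |ξ₁η₂ − ξ₂η₁| > 0. Suppose M > 0 and 2·D ≥ M². Then there exist integers λ, μ such that the point (x₁⁰, x₂⁰) = λξ + μη has both coordinates positive and satisfies max{x₁⁰, x₂⁰} ≤ 10·D/M; moreover |λ| ≤ 20·N/M and |μ| ≤ 20, where N = max of the absolute values of the two coordinates of η, provided N ≥ M. -/
def LPGood (a b c d D N : ℤ) : Prop :=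
  ∃ l m : ℤ, 0 < l * a + m * c ∧ 0 < l * b + m * d ∧
    a.natAbs * (l * a + m * c) ≤ 10 * D ∧ a.natAbs * (l * b + m * d) ≤ 10 * D ∧
    |l| * a.natAbs ≤ 20 * N ∧ |m| ≤ 20

lemma lp_core (a b c d D N : ℤ) (ha : 0 < a) (hb : |b| ≤ a) (hD : D = a * d - b * c)
    (hD0 : 0 < D) (haD : a ^ 2 ≤ 2 * D) (hN : a ≤ N) (hc : |c| ≤ N) : LPGood a b c d D N := by
  have h1 := Int.emod_add_mul_ediv (3 * c - 1) a
  have h2 := Int.emod_nonneg (3 * c - 1) ha.ne'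
  have h3 := Int.emod_lt_of_pos (3 * c - 1) ha
  unfold LPGood
  have hn : (a.natAbs : ℤ) = a := by omega
  rw [hn]
  set q := (3 * c - 1) / a
  set r := (3 * c - 1) % a
  obtain ⟨hb1, hb2⟩ := abs_le.mp hb
  obtain ⟨hc1, hc2⟩ := abs_le.mp hc
  have hx : -q * a + 3 * c = r + 1 := by linarith
  have hy : a * (-q * b + 3 * d) = b * (r + 1) + 3 * D := by rw [← hx, hD]; ring
  have hbr1 : b * (r + 1) ≤ a ^ 2 := by nlinarith
  have hbr2 : -a ^ 2 ≤ b * (r + 1) := by nlinarith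
  refine ⟨-q, 3, by linarith, ?_, ?_, ?_, ?_, by norm_num⟩
  · have : 0 < a * (-q * b + 3 * d) := by rw [hy]; linarith
    exact pos_of_mul_pos_right this ha.le
  · rw [hx]; nlinarith
  · rw [hy]; linarith
  · have : |-q| * a = |-q * a| := by rw [abs_mul, abs_of_pos ha]
    rw [this, abs_le]
    constructor <;> linarith

lemma lp_D (a b c d D N : ℤ) (ha : 0 < a) (hb : |b| ≤ a) (hD : D = |a * d - b * c|)
    (hD0 : 0 < D) (haD : a ^ 2 ≤ 2 * D) (hN : a ≤ N) (hc : |c| ≤ N) : LPGood a b c d D N := by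
  rcases abs_choice (a * d - b * c) with h | h
  · exact lp_core a b c d D N ha hb (by rw [hD, h]) hD0 haD hN hc
  · obtain ⟨l, m, h1, h2, h3, h4, h5, h6⟩ := lp_core a b (-c) (-d) D N ha hb
      (by rw [hD, h]; ring) hD0 haD hN (by rwa [abs_neg])
    have e1 : l * a + m * -c = l * a + -m * c := by ring
    have e2 : l * b + m * -d = l * b + -m * d := by ring
    rw [e1] at h1 h3
    rw [e2] at h2 h4
    exact ⟨l, -m, h1, h2, h3, h4, h5, by rwa [abs_neg]⟩

lemma lp_a (a b c d D N : ℤ) (ha : 0 < |a|) (hb : |b| ≤ |a|) (hD : D = |a * d - b * c|)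
    (hD0 : 0 < D) (haD : |a| ^ 2 ≤ 2 * D) (hN : |a| ≤ N) (hc : |c| ≤ N) :
    LPGood a b c d D N := by
  rcases abs_choice a with h | h
  · rw [h] at ha hb haD hN
    exact lp_D a b c d D N ha hb hD hD0 haD hN hc
  · rw [h] at ha hb haD hN
    obtain ⟨l, m, h1, h2, h3, h4, h5, h6⟩ := lp_D (-a) (-b) (-c) (-d) D N ha (by rwa [abs_neg])
      (by rw [hD]; congr 1; ring) hD0 haD hN (by rwa [abs_neg])
    have e1 : l * -a + m * -c = -l * a + -m * c := by ring
    have e2 : l * -b + m * -d = -l * b + -m * d := by ring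
    rw [e1] at h1 h3
    rw [e2] at h2 h4
    rw [Int.natAbs_neg] at h3 h4 h5
    exact ⟨-l, -m, h1, h2, h3, h4, by rwa [abs_neg], by rwa [abs_neg]⟩


/-- If ξ, η ∈ ℤ² with M = max{|ξ₁|,|ξ₂|} > 0, D = |ξ₁η₂ − ξ₂η₁| > 0, 2D ≥ M², and
N = max{|η₁|,|η₂|} ≥ M, then there are integers λ, μ such that λξ + μη has both
coordinates positive, max coordinate ≤ 10D/M, |λ| ≤ 20N/M and |μ| ≤ 20. -/
theorem lattice_point_positive (ξ η : ℤ × ℤ) (M N D : ℤ)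
    (hMdef : M = max |ξ.1| |ξ.2|) (hNdef : N = max |η.1| |η.2|)
    (hDdef : D = |ξ.1 * η.2 - ξ.2 * η.1|)
    (hM : 0 < M) (hDpos : 0 < D) (hD : (M : ℝ) ^ 2 ≤ 2 * (D : ℝ)) (hNM : M ≤ N) :
    ∃ l μ : ℤ,
      0 < l * ξ.1 + μ * η.1 ∧ 0 < l * ξ.2 + μ * η.2 ∧
      ((max (l * ξ.1 + μ * η.1) (l * ξ.2 + μ * η.2) : ℤ) : ℝ) ≤ 10 * (D : ℝ) / (M : ℝ) ∧
      (|l| : ℝ) ≤ 20 * (N : ℝ) / (M : ℝ) ∧ |μ| ≤ 20 := by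
  have hD' : M ^ 2 ≤ 2 * D := by exact_mod_cast hD
  have hMR : (0 : ℝ) < M := by exact_mod_cast hM
  have key : ∃ l m : ℤ, 0 < l * ξ.1 + m * η.1 ∧ 0 < l * ξ.2 + m * η.2 ∧
      M * (l * ξ.1 + m * η.1) ≤ 10 * D ∧ M * (l * ξ.2 + m * η.2) ≤ 10 * D ∧
      |l| * M ≤ 20 * N ∧ |m| ≤ 20 := by
    have hc : |η.1| ≤ N := hNdef ▸ le_max_left _ _
    have hd : |η.2| ≤ N := hNdef ▸ le_max_right _ _
    rcases le_total |ξ.2| |ξ.1| with h | h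
    · rw [max_eq_left h] at hMdef
      rw [hMdef] at hM hD' hNM
      have := lp_a ξ.1 ξ.2 η.1 η.2 D N hM h hDdef hDpos hD' hNM hc
      unfold LPGood at this
      rw [Int.natCast_natAbs, ← hMdef] at this
      exact this
    · rw [max_eq_right h] at hMdef
      rw [hMdef] at hM hD' hNM
      have := lp_a ξ.2 ξ.1 η.2 η.1 D N hM h (by rw [hDdef, abs_sub_comm]) hDpos hD' hNM hd
      unfold LPGood at this
      rw [Int.natCast_natAbs, ← hMdef] at this
      obtain ⟨l, m, h1, h2, h3, h4, h5, h6⟩ := this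
      exact ⟨l, m, h2, h1, h4, h3, h5, h6⟩
  obtain ⟨l, m, h1, h2, h3, h4, h5, h6⟩ := key
  refine ⟨l, m, h1, h2, ?_, ?_, h6⟩
  · rw [le_div_iff₀ hMR]
    have : max (l * ξ.1 + m * η.1) (l * ξ.2 + m * η.2) * M ≤ 10 * D := by
      rcases max_choice (l * ξ.1 + m * η.1) (l * ξ.2 + m * η.2) with h | h <;> rw [h] <;> linarith
    exact_mod_cast this
  · rw [le_div_iff₀ hMR]
    exact_mod_cast h5
end
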